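/- Let T be a uniquely ergodic homeomorphism of a compact metric space X with unique invariant measure μ, and let f : X → C be a bounded measurable function such that the closure of its set of discontinuity points has μ-measure zero. Then for every x ∈ X, (1/N) ∑_{n≤N} f(T^n x) converges to ∫_X f dμ as N → ∞. -/

import Mathlib

open MeasureTheory Filter

open scoped BoundedContinuousFunction Topology NNReal ENNReal

/-- Weak convergence passes to bounded measurable functions continuous off a closed null set. -/
lemma tendsto_integral_of_closure_disc_null
    {X : Type*} [MetricSpace X] [MeasurableSpace X] [BorelSpace X]
    (νs : ℕ → ProbabilityMeasure X) (μ : ProbabilityMeasure X)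
    (h : Tendsto νs atTop (𝓝 μ))
    (f : X → ℂ) (hmeas : Measurable f) (hbd : ∃ C : ℝ, ∀ x, ‖f x‖ ≤ C)
    (hdisc : (μ : Measure X) (closure {x : X | ¬ ContinuousAt f x}) = 0) :
    Tendsto (fun i => ∫ y, f y ∂(νs i : Measure X)) atTop (𝓝 (∫ y, f y ∂(μ : Measure X))) := by
  obtain ⟨C₀, hC₀⟩ := hbd
  obtain ⟨C, hC0, hC⟩ : ∃ C : ℝ, 0 < C ∧ ∀ x, ‖f x‖ ≤ C :=
    ⟨max C₀ 1, by positivity, fun x => (hC₀ x).trans (le_max_left _ _)⟩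
  set K := closure {x : X | ¬ ContinuousAt f x} with hK
  have hKc : IsClosed K := isClosed_closure
  have hint : ∀ ν : ProbabilityMeasure X, Integrable f (ν : Measure X) := fun ν =>
    Integrable.of_bound hmeas.aestronglyMeasurable C (Eventually.of_forall hC)
  have key := tendsto_integral_thickenedIndicator_of_isClosed (μ : Measure X) hKc
    (δs := fun n ↦ (1 : ℝ) / (n + 1)) (fun _ ↦ by positivity) tendsto_one_div_add_atTop_nhds_zero_nat
  have hK0 : (μ : Measure X).real K = 0 := by simp [Measure.real, hdisc]
  rw [hK0] at key
  rw [Metric.tendsto_atTop]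
  intro ε hε
  obtain ⟨M, hM⟩ := (key.eventually_lt_const (show (0:ℝ) < ε / (4 * C) by positivity)).exists
  have hMp : (0 : ℝ) < 1 / ((M : ℝ) + 1) := by positivity
  set ψ : X →ᵇ ℝ≥0 := thickenedIndicator hMp K with hψ
  have hψc : Continuous fun x => (ψ x : ℝ) := by fun_prop
  have hψ1 : ∀ x, (ψ x : ℝ) ≤ 1 := fun x =>
    NNReal.coe_le_one.2 (thickenedIndicator_le_one hMp K x)
  have hcont : Continuous fun x => ((1 - (ψ x : ℝ) : ℝ) : ℂ) * f x := by
    rw [continuous_iff_continuousAt]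
    intro x
    by_cases hx : x ∈ K
    · have hx1 : (ψ x : ℝ) = 1 :=
        NNReal.coe_eq_one.2 (thickenedIndicator_one hMp K hx)
      rw [ContinuousAt, hx1]
      simp only [sub_self, Complex.ofReal_zero, zero_mul]
      apply squeeze_zero_norm (a := fun y => (1 - (ψ y : ℝ)) * C)
      · intro y
        rw [norm_mul, Complex.norm_real, Real.norm_of_nonneg (by linarith [hψ1 y])]
        exact mul_le_mul_of_nonneg_left (hC y) (by linarith [hψ1 y])
      · have : Continuous fun y => (1 - (ψ y : ℝ)) * C := by fun_prop
        simpa [hx1] using this.tendsto x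
    · have hfx : ContinuousAt f x := by
        by_contra hcon
        exact hx (subset_closure hcon)
      exact ContinuousAt.mul (by fun_prop) hfx
  have hle : ∀ x, ‖((1 - (ψ x : ℝ) : ℝ) : ℂ) * f x‖ ≤ C := by
    intro x
    rw [norm_mul, Complex.norm_real, Real.norm_of_nonneg (by linarith [hψ1 x])]
    have h0 : (0:ℝ) ≤ ψ x := (ψ x).2
    nlinarith [hC x, hψ1 x, norm_nonneg (f x)]
  let g : X →ᵇ ℂ := BoundedContinuousFunction.ofNormedAddCommGroup _ hcont C hle
  have hg : ∀ x, g x = ((1 - (ψ x : ℝ) : ℝ) : ℂ) * f x := fun x => rfl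
  have hgi : ∀ ν : ProbabilityMeasure X, Integrable g (ν : Measure X) := fun ν => g.integrable _
  have hclose : ∀ ν : ProbabilityMeasure X,
      ‖∫ y, f y ∂(ν : Measure X) - ∫ y, g y ∂(ν : Measure X)‖
        ≤ C * ∫ y, (ψ y : ℝ) ∂(ν : Measure X) := by
    intro ν
    rw [← integral_sub (hint ν) (hgi ν), ← integral_const_mul]
    apply norm_integral_le_of_norm_le
    · exact (integrable_thickenedIndicator K hMp).const_mul C
    · refine Eventually.of_forall fun y => ?_
      have : f y - g y = ((ψ y : ℝ) : ℂ) * f y := by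
        rw [hg]; push_cast; ring
      rw [this, norm_mul, Complex.norm_real, Real.norm_of_nonneg (NNReal.coe_nonneg _), mul_comm]
      exact mul_le_mul_of_nonneg_right (hC y) (NNReal.coe_nonneg _)
  let ψr : X →ᵇ ℝ := BoundedContinuousFunction.ofNormedAddCommGroup (fun x => (ψ x : ℝ)) hψc 1
    (fun x => by rw [Real.norm_of_nonneg (NNReal.coe_nonneg _)]; exact hψ1 x)
  have t1 := (ProbabilityMeasure.tendsto_iff_forall_integral_tendsto.1 h) ψr
  have t2 := ((ProbabilityMeasure.tendsto_iff_forall_integral_rclike_tendsto ℂ).1 h) g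
  change Tendsto (fun i => ∫ y, (ψ y : ℝ) ∂(νs i : Measure X)) atTop
    (𝓝 (∫ y, (ψ y : ℝ) ∂(μ : Measure X))) at t1
  have e1 := t1.eventually_lt_const hM
  obtain ⟨N, hN⟩ := eventually_atTop.1
    (e1.and ((Metric.tendsto_nhds.1 t2) (ε / 2) (by positivity)))
  refine ⟨N, fun n hn => ?_⟩
  obtain ⟨a, b⟩ := hN n hn
  have c1 := hclose (νs n)
  have c2 := hclose μ
  have m1 : C * ∫ y, (ψ y : ℝ) ∂(νs n : Measure X) < ε / 4 := by
    have := mul_lt_mul_of_pos_left a hC0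
    have e : C * (ε / (4 * C)) = ε / 4 := by field_simp
    linarith
  have m2 : C * ∫ y, (ψ y : ℝ) ∂(μ : Measure X) < ε / 4 := by
    have := mul_lt_mul_of_pos_left hM hC0
    have e : C * (ε / (4 * C)) = ε / 4 := by field_simp
    linarith
  have d1 := dist_triangle4 (∫ y, f y ∂(νs n : Measure X)) (∫ y, g y ∂(νs n : Measure X))
    (∫ y, g y ∂(μ : Measure X)) (∫ y, f y ∂(μ : Measure X))
  rw [← dist_eq_norm] at c1 c2
  rw [dist_comm (∫ y, g y ∂(μ : Measure X))] at d1
  linarith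

/-- The empirical measure of the first `N + 1` points of the orbit. -/
noncomputable def empMeasure {X : Type*} [MeasurableSpace X] (T : X → X) (x : X) (N : ℕ) :
    ProbabilityMeasure X :=
  ⟨((N + 1 : ℕ) : ℝ≥0∞)⁻¹ • ∑ n ∈ Finset.range (N + 1), Measure.dirac (T^[n] x), ⟨by
    simp only [Measure.smul_apply, Measure.coe_finsetSum, Finset.sum_apply, measure_univ,
      Finset.sum_const, Finset.card_range, smul_eq_mul, nsmul_eq_mul, mul_one]
    exact ENNReal.inv_mul_cancel (by simp) (ENNReal.natCast_ne_top _)⟩⟩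

lemma integral_empMeasure {X E : Type*} [MeasurableSpace X] [NormedAddCommGroup E]
    [NormedSpace ℝ E] [CompleteSpace E] [MeasurableSpace E] [BorelSpace E]
    [SecondCountableTopology E] (T : X → X) (x : X) (N : ℕ)
    (f : X → E) (hf : Measurable f) :
    ∫ y, f y ∂(empMeasure T x N : Measure X)
      = ((N + 1 : ℕ) : ℝ)⁻¹ • ∑ n ∈ Finset.range (N + 1), f (T^[n] x) := by
  have hi : ∀ a : X, Integrable f (Measure.dirac a) := fun a =>
    integrable_dirac' hf.stronglyMeasurable (by simp)
  change ∫ y, f y ∂(((N + 1 : ℕ) : ℝ≥0∞)⁻¹ •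
    ∑ n ∈ Finset.range (N + 1), Measure.dirac (T^[n] x)) = _
  rw [integral_smul_measure, integral_finsetSum_measure (fun i _ => hi _)]
  congr 1
  · rw [ENNReal.toReal_inv, ENNReal.toReal_natCast]
  · exact Finset.sum_congr rfl fun i _ => integral_dirac' _ _ hf.stronglyMeasurable

lemma empMeasure_tendsto
    {X : Type*} [MetricSpace X] [CompactSpace X] [MeasurableSpace X] [BorelSpace X]
    (T : X ≃ₜ X) (μ : ProbabilityMeasure X)
    (hue : ∀ ν : Measure X, IsProbabilityMeasure ν → Measure.map T ν = ν → ν = μ) (x : X) :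
    Tendsto (empMeasure T x) atTop (𝓝 μ) := by
  rw [tendsto_iff_ultrafilter]
  intro U hU
  obtain ⟨ν, hν⟩ : ∃ ν, Tendsto (empMeasure T x) U (𝓝 ν) :=
    ⟨_, (U.map (empMeasure T x)).le_nhds_lim⟩
  suffices h : ν = μ by rwa [← h]
  apply Subtype.ext
  have hνp : IsProbabilityMeasure (ν : Measure X) := ν.2
  refine hue (ν : Measure X) hνp ?_
  have : IsProbabilityMeasure (Measure.map T (ν : Measure X)) :=
    Measure.isProbabilityMeasure_map T.continuous.measurable.aemeasurable
  apply ext_of_forall_integral_eq_of_IsFiniteMeasure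
  intro g
  rw [integral_map T.continuous.measurable.aemeasurable
    g.continuous.measurable.aestronglyMeasurable]
  have t := ProbabilityMeasure.tendsto_iff_forall_integral_tendsto.1 hν
  have t1 := t g
  have t2 := t (g.compContinuous ⟨T, T.continuous⟩)
  have t3 := t2.sub t1
  have t4 : Tendsto (fun N : ℕ => 2 * ‖g‖ * (1 / ((N : ℝ) + 1))) U (𝓝 0) := by
    simpa using (tendsto_one_div_add_atTop_nhds_zero_nat.mono_left hU).const_mul (2 * ‖g‖)
  have t5 : Tendsto (fun N => ∫ y, (g.compContinuous ⟨T, T.continuous⟩) y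
      ∂(empMeasure T x N : Measure X) - ∫ y, g y ∂(empMeasure T x N : Measure X)) U (𝓝 0) := by
    apply squeeze_zero_norm _ t4
    intro N
    rw [integral_empMeasure _ _ _ _ (g.compContinuous ⟨T, T.continuous⟩).continuous.measurable,
      integral_empMeasure _ _ _ _ g.continuous.measurable, ← smul_sub, ← Finset.sum_sub_distrib]
    have : ∀ n, (g.compContinuous ⟨T, T.continuous⟩) (T^[n] x) = g (T^[n+1] x) := by
      intro n
      rw [Function.iterate_succ_apply']; rfl
    simp only [this]
    rw [Finset.sum_range_sub (fun n => g (T^[n] x)), norm_smul]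
    have b : ‖g (T^[N+1] x) - g (T^[0] x)‖ ≤ 2 * ‖g‖ := by
      have := norm_sub_le (g (T^[N+1] x)) (g (T^[0] x))
      linarith [g.norm_coe_le_norm (T^[N+1] x), g.norm_coe_le_norm (T^[0] x)]
    have e : ‖(((N + 1 : ℕ) : ℝ))⁻¹‖ = 1 / ((N : ℝ) + 1) := by
      rw [Real.norm_of_nonneg (by positivity)]; push_cast; simp
    rw [e, mul_comm]
    exact mul_le_mul_of_nonneg_right b (by positivity)
  exact sub_eq_zero.1 (tendsto_nhds_unique t3 t5)

/-- For a uniquely ergodic homeomorphism `T` of a compact metric space, the Birkhoff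
averages of any bounded measurable function whose set of discontinuity points has closure
of measure zero converge at every point to the space average. -/
theorem birkhoff_average_tendsto_of_ae_continuous
    {X : Type*} [MetricSpace X] [CompactSpace X] [MeasurableSpace X] [BorelSpace X]
    (T : X ≃ₜ X) (μ : Measure X) [IsProbabilityMeasure μ]
    (hT : MeasurePreserving T μ μ)
    (hue : ∀ ν : Measure X, IsProbabilityMeasure ν → Measure.map T ν = ν → ν = μ)
    (f : X → ℂ) (hmeas : Measurable f) (hbd : ∃ C : ℝ, ∀ x, ‖f x‖ ≤ C)
    (hdisc : μ (closure {x : X | ¬ ContinuousAt f x}) = 0) :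
    ∀ x : X,
      Tendsto (fun N : ℕ => (N : ℂ)⁻¹ • ∑ n ∈ Finset.range N, f ((⇑T)^[n] x))
        atTop (nhds (∫ y, f y ∂μ)) := by
  intro x
  rw [← tendsto_add_atTop_iff_nat 1]
  have h1 := empMeasure_tendsto T ⟨μ, inferInstance⟩ hue x
  have h2 := tendsto_integral_of_closure_disc_null _ _ h1 f hmeas hbd hdisc
  refine h2.congr fun N => ?_
  rw [integral_empMeasure _ _ _ _ hmeas, Complex.real_smul, smul_eq_mul]
  push_cast
  rfl
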